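/- arXiv:1712.03638 — 2 statements merged into one kernel-verified Lean document; each statement's English description precedes it below -/
import Mathlib

section
/- Let a ~ N(0, I_n) and V a symmetric n×n matrix with ‖V‖_F = 1. Then P(|⟨aaᵀ − I, V⟩|² ≥ 1) ≥ c₀ for a universal constant c₀ > 0 (one may take c₀ = 1/324). -/
open MeasureTheory ProbabilityTheory

lemma aux_diag {n : ℕ} (V : Matrix (Fin n) (Fin n) ℝ) (hV : V.IsSymm) :
    ∃ (l : Fin n → ℝ) (T : (Fin n → ℝ) → (Fin n → ℝ)),
      MeasurePreserving T (Measure.pi fun _ : Fin n => gaussianReal 0 1)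
        (Measure.pi fun _ : Fin n => gaussianReal 0 1) ∧
      (∑ i, ∑ j, V i j ^ 2 = ∑ i, l i ^ 2) ∧
      ∀ x, (∑ i, ∑ j, T x i * V i j * T x j) - V.trace = ∑ i, l i * (x i ^ 2 - 1) := by
  have hA : V.IsHermitian := by
    rw [Matrix.IsHermitian, Matrix.conjTranspose_eq_transpose_of_trivial]; exact hV
  let U : Matrix (Fin n) (Fin n) ℝ := hA.eigenvectorUnitary
  have hU : U.transpose * U = 1 := by
    have := Unitary.coe_star_mul_self hA.eigenvectorUnitary
    rwa [Matrix.star_eq_conjTranspose, Matrix.conjTranspose_eq_transpose_of_trivial] at this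
  have hs : V = U * Matrix.diagonal hA.eigenvalues * U.transpose := by
    have := hA.spectral_theorem
    rw [Unitary.conjStarAlgAut_apply, Matrix.star_eq_conjTranspose, Matrix.conjTranspose_eq_transpose_of_trivial] at this
    exact this
  refine ⟨hA.eigenvalues, fun x => U.mulVec x, ?_, ?_, ?_⟩
  · refine ⟨by fun_prop, ?_⟩
    have h1 := stdGaussian_eq_map_pi_orthonormalBasis hA.eigenvectorBasis
    rw [← map_pi_eq_stdGaussian] at h1
    have h2 := congrArg (Measure.map (WithLp.ofLp : EuclideanSpace ℝ (Fin n) → _)) h1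
    rw [Measure.map_map (by fun_prop) (by fun_prop), Measure.map_map (by fun_prop) (by fun_prop)] at h2
    have e1 : (WithLp.ofLp : EuclideanSpace ℝ (Fin n) → (Fin n → ℝ)) ∘ WithLp.toLp 2 = id := by
      ext; simp
    rw [e1, Measure.map_id] at h2
    have e2 : ((WithLp.ofLp : EuclideanSpace ℝ (Fin n) → (Fin n → ℝ)) ∘ fun x : Fin n → ℝ => ∑ i, x i • hA.eigenvectorBasis i) = fun x => U.mulVec x := by
      ext x i
      simp [Matrix.mulVec, dotProduct, U, Matrix.IsHermitian.eigenvectorUnitary_apply, mul_comm]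
    rw [e2] at h2
    exact h2.symm
  · have h1 : ∑ i, ∑ j, V i j ^ 2 = (V * V.transpose).trace := by
      simp [Matrix.trace, Matrix.mul_apply, pow_two]
    rw [h1, hV.eq]
    nth_rw 1 2 [hs]
    rw [show U * Matrix.diagonal hA.eigenvalues * U.transpose * (U * Matrix.diagonal hA.eigenvalues * U.transpose) = U * (Matrix.diagonal hA.eigenvalues * (U.transpose * U) * Matrix.diagonal hA.eigenvalues * U.transpose) by simp only [Matrix.mul_assoc], Matrix.trace_mul_comm, Matrix.mul_assoc _ U.transpose, hU]
    simp [Matrix.trace, pow_two]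
  · intro x
    have ht : V.trace = ∑ i, hA.eigenvalues i := by
      rw [hA.trace_eq_sum_eigenvalues]; simp
    have h1 : ∑ i, ∑ j, U.mulVec x i * V i j * U.mulVec x j = dotProduct (U.mulVec x) (V.mulVec (U.mulVec x)) := by
      simp only [dotProduct, Matrix.mulVec.eq_1 V, Finset.mul_sum, mul_assoc]
    have h2 : V.mulVec (U.mulVec x) = U.mulVec ((Matrix.diagonal hA.eigenvalues).mulVec x) := by
      nth_rw 1 [hs]
      rw [Matrix.mulVec_mulVec, Matrix.mul_assoc, hU, Matrix.mul_one, Matrix.mulVec_mulVec]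
    rw [h1, h2, ht, Matrix.dotProduct_mulVec, Matrix.vecMul_mulVec, hU]
    simp only [Matrix.vecMul_one, dotProduct, Matrix.mulVec_diagonal]
    rw [← Finset.sum_sub_distrib]
    refine Finset.sum_congr rfl fun i _ => ?_
    ring

lemma aux_int (k : ℕ) : Integrable (fun x : ℝ => x ^ k) (gaussianReal 0 1) := by
  have := (memLp_id_gaussianReal (μ := 0) (v := 1) (k : NNReal)).integrable_norm_pow'
  refine this.mono (by fun_prop) ?_
  simp

lemma aux_int' (k : ℕ) : Integrable (fun x : ℝ => x ^ k * gaussianPDFReal 0 1 x) := by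
  have h := aux_int k
  rw [gaussianReal_of_var_ne_zero _ one_ne_zero] at h
  rw [integrable_withDensity_iff (by fun_prop) (by simp [gaussianPDF])] at h
  simpa [gaussianPDF, gaussianPDFReal_nonneg] using h

lemma aux_mom (k : ℕ) : ∫ x, x ^ (k + 2) ∂(gaussianReal 0 1) = (k + 1) * ∫ x, x ^ k ∂(gaussianReal 0 1) := by
  rw [integral_gaussianReal_eq_integral_smul one_ne_zero, integral_gaussianReal_eq_integral_smul one_ne_zero]
  have hd : ∀ x : ℝ, HasDerivAt (gaussianPDFReal 0 1) (- x * gaussianPDFReal 0 1 x) x := by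
    intro x
    have e : gaussianPDFReal 0 1 = fun y : ℝ => (√(2 * Real.pi))⁻¹ * Real.exp (-y ^ 2 / 2) := by
      ext y; simp [gaussianPDFReal]
    rw [e]
    have h0 : HasDerivAt (fun y : ℝ => -y ^ 2 / 2) (-x) x :=
      ((hasDerivAt_pow 2 x).fun_neg.div_const 2).congr_deriv (by norm_num; ring)
    exact (h0.exp.const_mul (√(2 * Real.pi))⁻¹).congr_deriv (by ring)
  have h := integral_eq_zero_of_hasDerivAt_of_integrable
    (f := fun x : ℝ => x ^ (k + 1) * gaussianPDFReal 0 1 x)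
    (f' := fun x : ℝ => (k + 1) * (x ^ k * gaussianPDFReal 0 1 x) - x ^ (k+2) * gaussianPDFReal 0 1 x)
    (fun x => by
      exact ((hasDerivAt_pow (k+1) x).fun_mul (hd x)).congr_deriv (by
        push_cast; ring))
    (((aux_int' k).const_mul _).sub (aux_int' (k+2))) (aux_int' (k+1))
  rw [integral_sub ((aux_int' k).const_mul _) (aux_int' (k+2)), integral_const_mul] at h
  simp only [smul_eq_mul, mul_comm (gaussianPDFReal 0 1 _)]
  linarith

lemma aux_m0 : ∫ x : ℝ, x ^ 0 ∂(gaussianReal 0 1) = 1 := by simp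
lemma aux_m2 : ∫ x : ℝ, x ^ 2 ∂(gaussianReal 0 1) = 1 := by
  rw [aux_mom 0, aux_m0]; norm_num
lemma aux_m4 : ∫ x : ℝ, x ^ 4 ∂(gaussianReal 0 1) = 3 := by
  rw [aux_mom 2, aux_m2]; norm_num
lemma aux_m6 : ∫ x : ℝ, x ^ 6 ∂(gaussianReal 0 1) = 15 := by
  rw [aux_mom 4, aux_m4]; norm_num
lemma aux_m8 : ∫ x : ℝ, x ^ 8 ∂(gaussianReal 0 1) = 105 := by
  rw [aux_mom 6, aux_m6]; norm_num

lemma aux_c1 : ∫ x : ℝ, (x ^ 2 - 1) ∂(gaussianReal 0 1) = 0 := by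
  rw [integral_sub (aux_int 2) (integrable_const _), aux_m2]; simp

lemma aux_c2 : ∫ x : ℝ, (x ^ 2 - 1) ^ 2 ∂(gaussianReal 0 1) = 2 := by
  have : ∀ x : ℝ, (x ^ 2 - 1) ^ 2 = x ^ 4 - 2 * x ^ 2 + x ^ 0 := fun x => by ring
  simp only [this]
  have i1 : Integrable (fun x : ℝ => x ^ 4 - 2 * x ^ 2) (gaussianReal 0 1) := (aux_int 4).sub ((aux_int 2).const_mul _)
  rw [integral_add i1 (aux_int 0),
    integral_sub (aux_int 4) ((aux_int 2).const_mul _), integral_const_mul, aux_m4, aux_m2, aux_m0]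
  norm_num

lemma aux_c4 : ∫ x : ℝ, (x ^ 2 - 1) ^ 4 ∂(gaussianReal 0 1) = 60 := by
  have : ∀ x : ℝ, (x ^ 2 - 1) ^ 4 = (x ^ 8 - 4 * x ^ 6) + (6 * x ^ 4 - 4 * x ^ 2) + x ^ 0 := fun x => by ring
  simp only [this]
  have i1 : Integrable (fun x : ℝ => x ^ 8 - 4 * x ^ 6) (gaussianReal 0 1) := (aux_int 8).sub ((aux_int 6).const_mul 4)
  have i2 : Integrable (fun x : ℝ => 6 * x ^ 4 - 4 * x ^ 2) (gaussianReal 0 1) := ((aux_int 4).const_mul 6).sub ((aux_int 2).const_mul 4)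
  have i3 : Integrable (fun x : ℝ => x ^ 8 - 4 * x ^ 6 + (6 * x ^ 4 - 4 * x ^ 2)) (gaussianReal 0 1) := i1.add i2
  rw [integral_add i3 (aux_int 0), integral_add i1 i2,
    integral_sub (aux_int 8) ((aux_int 6).const_mul _),
    integral_sub ((aux_int 4).const_mul _) ((aux_int 2).const_mul _),
    integral_const_mul, integral_const_mul, integral_const_mul, aux_m8, aux_m6, aux_m4, aux_m2, aux_m0]
  norm_num

lemma aux_cint (k : ℕ) : Integrable (fun x : ℝ => (x ^ 2 - 1) ^ k) (gaussianReal 0 1) := by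
  have h : ∀ x : ℝ, (x ^ 2 - 1) ^ k =
      ∑ m ∈ Finset.range (k + 1), ((-1) ^ (k - m) * (k.choose m : ℝ)) * x ^ (2 * m) := by
    intro x
    rw [sub_eq_add_neg, add_pow]
    refine Finset.sum_congr rfl fun m _ => ?_
    rw [pow_mul]; ring
  simp only [h]
  exact integrable_finsetSum _ fun m _ => (aux_int (2 * m)).const_mul _

section step
variable {Ω : Type*} [MeasurableSpace Ω] {μ : Measure Ω} {S T : Ω → ℝ}

lemma aux_mulint (hI : IndepFun S T μ) (hS : ∀ k : ℕ, Integrable (fun w => S w ^ k) μ)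
    (hT : ∀ k : ℕ, Integrable (fun w => T w ^ k) μ) (a b : ℕ) :
    Integrable (fun w => S w ^ a * T w ^ b) μ :=
  (hI.comp (φ := fun x : ℝ => x ^ a) (ψ := fun x : ℝ => x ^ b)
    (by fun_prop) (by fun_prop)).integrable_mul (hS a) (hT b)

lemma aux_muleq (hI : IndepFun S T μ) (hS : ∀ k : ℕ, Integrable (fun w => S w ^ k) μ)
    (hT : ∀ k : ℕ, Integrable (fun w => T w ^ k) μ) (a b : ℕ) :
    ∫ w, S w ^ a * T w ^ b ∂μ = (∫ w, S w ^ a ∂μ) * ∫ w, T w ^ b ∂μ :=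
  (hI.comp (φ := fun x : ℝ => x ^ a) (ψ := fun x : ℝ => x ^ b)
    (by fun_prop) (by fun_prop)).integral_fun_mul_eq_mul_integral (hS a).1 (hT b).1

lemma aux_addint (hI : IndepFun S T μ) (hS : ∀ k : ℕ, Integrable (fun w => S w ^ k) μ)
    (hT : ∀ k : ℕ, Integrable (fun w => T w ^ k) μ) (k : ℕ) :
    Integrable (fun w => (S w + T w) ^ k) μ := by
  simp only [add_pow]
  exact integrable_finsetSum _ fun m _ => (aux_mulint hI hS hT _ _).mul_const _

lemma aux_addeq (hI : IndepFun S T μ) (hS : ∀ k : ℕ, Integrable (fun w => S w ^ k) μ)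
    (hT : ∀ k : ℕ, Integrable (fun w => T w ^ k) μ) (k : ℕ) :
    ∫ w, (S w + T w) ^ k ∂μ = ∑ m ∈ Finset.range (k + 1),
      (∫ w, S w ^ m ∂μ) * (∫ w, T w ^ (k - m) ∂μ) * (k.choose m : ℝ) := by
  simp only [add_pow]
  rw [integral_finsetSum _ fun m _ => (aux_mulint hI hS hT _ _).mul_const _]
  refine Finset.sum_congr rfl fun m _ => ?_
  rw [integral_mul_const, aux_muleq hI hS hT]
end step

lemma aux_sum {n : ℕ} (l : Fin n → ℝ) (s : Finset (Fin n)) :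
    (∀ k : ℕ, Integrable (fun x : Fin n → ℝ => (∑ i ∈ s, l i * (x i ^ 2 - 1)) ^ k)
      (Measure.pi fun _ : Fin n => gaussianReal 0 1)) ∧
    (∫ x : Fin n → ℝ, (∑ i ∈ s, l i * (x i ^ 2 - 1)) ^ 1
      ∂(Measure.pi fun _ : Fin n => gaussianReal 0 1) = 0) ∧
    (∫ x : Fin n → ℝ, (∑ i ∈ s, l i * (x i ^ 2 - 1)) ^ 2
      ∂(Measure.pi fun _ : Fin n => gaussianReal 0 1) = 2 * ∑ i ∈ s, l i ^ 2) ∧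
    (∫ x : Fin n → ℝ, (∑ i ∈ s, l i * (x i ^ 2 - 1)) ^ 4
      ∂(Measure.pi fun _ : Fin n => gaussianReal 0 1) ≤ 60 * (∑ i ∈ s, l i ^ 2) ^ 2) := by
  induction s using Finset.induction_on with
  | empty =>
    refine ⟨fun k => ?_, ?_, ?_, ?_⟩ <;> simp
  | insert j s hj ih =>
    obtain ⟨h0, h1, h2, h4⟩ := ih
    have hT : ∀ k : ℕ, Integrable (fun x : Fin n → ℝ => (l j * (x j ^ 2 - 1)) ^ k)
        (Measure.pi fun _ : Fin n => gaussianReal 0 1) := by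
      intro k
      simp only [mul_pow]
      exact (integrable_comp_eval (μ := fun _ : Fin n => gaussianReal 0 1) (i := j)
        (aux_cint k)).const_mul _
    have hTe : ∀ k : ℕ, ∫ x : Fin n → ℝ, (l j * (x j ^ 2 - 1)) ^ k
        ∂(Measure.pi fun _ : Fin n => gaussianReal 0 1)
        = l j ^ k * ∫ x : ℝ, (x ^ 2 - 1) ^ k ∂(gaussianReal 0 1) := by
      intro k
      simp only [mul_pow]
      rw [integral_const_mul]
      congr 1
      exact integral_comp_eval (μ := fun _ : Fin n => gaussianReal 0 1) (i := j) (aux_cint k).1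
    have hI : IndepFun (fun x : Fin n → ℝ => ∑ i ∈ s, l i * (x i ^ 2 - 1))
        (fun x : Fin n → ℝ => l j * (x j ^ 2 - 1))
        (Measure.pi fun _ : Fin n => gaussianReal 0 1) := by
      have h := (iIndepFun_pi (μ := fun _ : Fin n => gaussianReal 0 1)
        (X := fun (i : Fin n) (x : ℝ) => l i * (x ^ 2 - 1))
        (fun i => by fun_prop)).indepFun_finsetSum_of_notMem (fun i => by fun_prop) hj
      convert h using 1
      ext x; simp
    have e : ∀ x : Fin n → ℝ, ∑ i ∈ insert j s, l i * (x i ^ 2 - 1) =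
        (∑ i ∈ s, l i * (x i ^ 2 - 1)) + l j * (x j ^ 2 - 1) := by
      intro x; rw [Finset.sum_insert hj, add_comm]
    have e' : ∑ i ∈ insert j s, l i ^ 2 = (∑ i ∈ s, l i ^ 2) + l j ^ 2 := by
      rw [Finset.sum_insert hj, add_comm]
    have t1 : ∫ x : ℝ, (x ^ 2 - 1) ^ 1 ∂(gaussianReal 0 1) = 0 := by simpa using aux_c1
    simp only [e, e']
    refine ⟨aux_addint hI h0 hT, ?_, ?_, ?_⟩
    · rw [aux_addeq hI h0 hT]
      simp only [Finset.sum_range_succ, Finset.sum_range_zero, hTe, h1, t1]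
      norm_num [t1, -pow_one]
    · rw [aux_addeq hI h0 hT]
      simp only [Finset.sum_range_succ, Finset.sum_range_zero, hTe, h1, h2]
      norm_num [t1, aux_c2, -pow_one]
      ring
    · rw [aux_addeq hI h0 hT]
      simp only [Finset.sum_range_succ, Finset.sum_range_zero, hTe, h1, h2]
      norm_num [t1, aux_c1, aux_c2, aux_c4, -pow_one, Nat.choose]
      have := mul_nonneg (Finset.sum_nonneg fun i (_ : i ∈ s) => sq_nonneg (l i)) (sq_nonneg (l j))
      nlinarith [this, h4]

/-- Small-ball bound: for `a ~ N(0, I_n)` and symmetric `V` with `‖V‖_F = 1`,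
`P(|⟨aaᵀ − I, V⟩|² ≥ 1) ≥ 1/324`. -/
theorem stmt12 {n : ℕ} (V : Matrix (Fin n) (Fin n) ℝ) (hV : V.IsSymm)
    (hVF : Real.sqrt (∑ i, ∑ j, V i j ^ 2) = 1) :
    ENNReal.ofReal (1 / 324)
      ≤ (Measure.pi fun _ : Fin n => gaussianReal 0 1)
          {a : Fin n → ℝ |
            1 ≤ ((∑ i, ∑ j, a i * V i j * a j) - V.trace) ^ 2} := by
  obtain ⟨l, T, hT, hl, hx⟩ := aux_diag V hV
  have hm : MeasurableSet {a : Fin n → ℝ |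
      1 ≤ ((∑ i, ∑ j, a i * V i j * a j) - V.trace) ^ 2} :=
    measurableSet_le (by fun_prop) (by fun_prop)
  rw [← hT.measure_preimage hm.nullMeasurableSet]
  simp only [Set.preimage_ofPred_eq, hx]
  rw [Real.sqrt_eq_one, hl] at hVF
  obtain ⟨h0, -, h2, h4⟩ := aux_sum l Finset.univ
  rw [hVF] at h2 h4
  set μ := Measure.pi fun _ : Fin n => gaussianReal 0 1
  have hA : MeasurableSet {x : Fin n → ℝ | 1 ≤ (∑ i, l i * (x i ^ 2 - 1)) ^ 2} :=
    measurableSet_le (by fun_prop) (by fun_prop)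
  set A := {x : Fin n → ℝ | 1 ≤ (∑ i, l i * (x i ^ 2 - 1)) ^ 2} with hAd
  have hp : ∀ x : Fin n → ℝ, (∑ i, l i * (x i ^ 2 - 1)) ^ 2 ≤
      (1 + (1 / 120) * (∑ i, l i * (x i ^ 2 - 1)) ^ 4) + A.indicator (fun _ => (30 : ℝ)) x := by
    intro x
    by_cases hxA : x ∈ A
    · rw [Set.indicator_of_mem hxA]
      nlinarith [sq_nonneg ((∑ i, l i * (x i ^ 2 - 1)) ^ 2 - 60)]
    · rw [Set.indicator_of_notMem hxA]
      have : (∑ i, l i * (x i ^ 2 - 1)) ^ 2 < 1 := not_le.mp hxA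
      have h' : 0 ≤ (∑ i, l i * (x i ^ 2 - 1)) ^ 4 := by positivity
      linarith
  have i1 : Integrable (fun x : Fin n → ℝ => 1 + (1 / 120) * (∑ i, l i * (x i ^ 2 - 1)) ^ 4) μ :=
    (integrable_const _).add ((h0 4).const_mul _)
  have i2 : Integrable (A.indicator (fun _ => (30 : ℝ))) μ := (integrable_const _).indicator hA
  have h := integral_mono (h0 2) (i1.add i2) hp
  simp only [Pi.add_apply] at h
  rw [integral_add i1 i2, integral_add (integrable_const _) ((h0 4).const_mul _),
    integral_const_mul, integral_indicator_const _ hA, h2] at h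
  simp at h
  apply ENNReal.ofReal_le_of_le_toReal
  change _ ≤ μ.real A
  linarith
end

section
/- Let H̃ = Σᵢ₌₁ᵐ pᵢεᵢaᵢaᵢᵀ where a₁,…,a_m are i.i.d. N(0,I_n), ε₁,…,ε_m are i.i.d. Rademacher independent of the aᵢ, and p ∈ ℝᵐ is fixed. Then there exists a universal constant C > 0 such that, for sufficiently large n, E[‖H̃‖₂] ≤ C·(‖p‖₂·√n + ‖p‖_∞·n), where ‖·‖₂ is the spectral norm. -/
open MeasureTheory ProbabilityTheory
/-- The Rademacher distribution on `ℝ`: `±1` with probability `1/2` each. -/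
noncomputable def rademacher : Measure ℝ :=
  (1 / 2 : ENNReal) • Measure.dirac (1 : ℝ) + (1 / 2 : ENNReal) • Measure.dirac (-1 : ℝ)

/-- Spectral norm of a real square matrix. -/
noncomputable def specNorm {ι : Type*} [Fintype ι] [DecidableEq ι]
    (M : Matrix ι ι ℝ) : ℝ :=
  ‖Matrix.toEuclideanCLM (𝕜 := ℝ) M‖

instance isProb_rademacher : IsProbabilityMeasure rademacher := by
  constructor
  simp [rademacher, ENNReal.inv_two_add_inv_two]

lemma lintegral_gauss_sq (s : ℝ) (hs : s < 1/2) :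
    ∫⁻ x, ENNReal.ofReal (Real.exp (s * x ^ 2)) ∂(gaussianReal 0 1)
      = ENNReal.ofReal (Real.sqrt (1 / (1 - 2 * s))) := by
  rw [gaussianReal_of_var_ne_zero _ one_ne_zero,
    lintegral_withDensity_eq_lintegral_mul _ (measurable_gaussianPDF _ _) (by fun_prop)]
  have h1 : ∀ x : ℝ, (gaussianPDF 0 1 * fun x => ENNReal.ofReal (Real.exp (s * x ^ 2))) x
      = ENNReal.ofReal ((Real.sqrt (2 * Real.pi))⁻¹ * Real.exp (-(1/2 - s) * x ^ 2)) := by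
    intro x
    rw [Pi.mul_apply, gaussianPDF, ← ENNReal.ofReal_mul (gaussianPDFReal_nonneg _ _ _),
      gaussianPDFReal, mul_assoc, ← Real.exp_add]
    congr 2
    · simp
    · congr 1; simp; ring
  simp_rw [h1]
  rw [← ofReal_integral_eq_lintegral_ofReal]
  · rw [integral_const_mul, integral_gaussian, ← Real.sqrt_inv, ← Real.sqrt_mul (by positivity)]
    congr 2
    have : (1 - 2 * s) ≠ 0 := by linarith
    have : (1/2 - s) ≠ 0 := by linarith
    field_simp
  · exact (integrable_exp_neg_mul_sq (by linarith)).const_mul _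
  · exact Filter.Eventually.of_forall fun x => by positivity

lemma sqrt_avg_bound (s : ℝ) (hs : |s| ≤ 1/4) :
    (Real.sqrt (1 / (1 - 2 * s)) + Real.sqrt (1 / (1 + 2 * s))) / 2 ≤ Real.exp (4 * s ^ 2) := by
  obtain ⟨h1, h2⟩ := abs_le.1 hs
  have ha : 0 < 1 - 2 * s := by linarith
  have hb : 0 < 1 + 2 * s := by linarith
  have hs2 : s ^ 2 ≤ 1/16 := by nlinarith
  apply le_of_sq_le_sq _ (Real.exp_pos _).le
  have e1 := Real.sq_sqrt (show 0 ≤ 1 / (1 - 2 * s) by positivity)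
  have e2 := Real.sq_sqrt (show 0 ≤ 1 / (1 + 2 * s) by positivity)
  calc _ ≤ (1 / (1 - 2 * s) + 1 / (1 + 2 * s)) / 2 := by
        nlinarith [sq_nonneg (Real.sqrt (1 / (1 - 2 * s)) - Real.sqrt (1 / (1 + 2 * s)))]
    _ ≤ 8 * s ^ 2 + 1 := by
        rw [div_add_div _ _ ha.ne' hb.ne', div_div, div_le_iff₀ (by positivity)]
        nlinarith [sq_nonneg s, mul_nonneg (sq_nonneg s) (sub_nonneg.2 hs2)]
    _ ≤ Real.exp (8 * s ^ 2) := Real.add_one_le_exp _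
    _ = _ := by rw [← Real.exp_nat_mul]; congr 1; push_cast; ring

lemma map_dot (n : ℕ) (u : EuclideanSpace ℝ (Fin n)) :
    (Measure.pi fun _ : Fin n => gaussianReal 0 1).map (fun a => ∑ i, a i * u i)
      = (gaussianReal 0 1).map (‖u‖ * ·) := by
  rw [gaussianReal_map_const_mul]
  have hm : Measurable (fun a : Fin n → ℝ => ∑ i, a i * u i) := by fun_prop
  have := Measure.isProbabilityMeasure_map (μ := Measure.pi fun _ : Fin n => gaussianReal 0 1)
    hm.aemeasurable
  apply Measure.ext_of_charFun
  ext t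
  rw [charFun_gaussianReal, charFun_apply_real, integral_map hm.aemeasurable (by fun_prop)]
  have h2 : ∀ a : Fin n → ℝ, Complex.exp (t * ((∑ i, a i * u i : ℝ) : ℂ) * Complex.I)
     = ∏ i, Complex.exp ((t * u i : ℝ) * (a i) * Complex.I) := by
    intro a
    rw [← Complex.exp_sum]
    congr 1
    push_cast
    rw [Finset.mul_sum, Finset.sum_mul]
    refine Finset.sum_congr rfl fun i _ => by ring
  simp_rw [h2]
  rw [integral_fintype_prod_eq_prod (f := fun i x => Complex.exp ((t * u i : ℝ) * (x:ℝ) * Complex.I))]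
  simp_rw [← charFun_apply_real, charFun_gaussianReal]
  rw [← Complex.exp_sum]
  congr 1
  have : ((NNReal.mk (‖u‖ ^ 2) (sq_nonneg _) * 1 : NNReal) : ℂ) = ∑ i, (u i : ℂ) ^ 2 := by
    rw [mul_one]
    have := EuclideanSpace.real_norm_sq_eq u
    have h3 : ((NNReal.mk (‖u‖ ^ 2) (sq_nonneg _) : NNReal) : ℝ) = ∑ i, (u i) ^ 2 := this
    exact_mod_cast congrArg (fun x : ℝ => (x : ℂ)) h3
  rw [this]
  simp [mul_pow, mul_comm]
  rw [Finset.mul_sum, Finset.sum_div]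

lemma lintegral_dot (n : ℕ) (u : EuclideanSpace ℝ (Fin n)) (s : ℝ) (hs : s * ‖u‖ ^ 2 < 1/2) :
    ∫⁻ a, ENNReal.ofReal (Real.exp (s * (∑ i, a i * u i) ^ 2))
        ∂(Measure.pi fun _ : Fin n => gaussianReal 0 1)
      = ENNReal.ofReal (Real.sqrt (1 / (1 - 2 * (s * ‖u‖ ^ 2)))) := by
  rw [← lintegral_gauss_sq _ hs]
  have := lintegral_map (μ := Measure.pi fun _ : Fin n => gaussianReal 0 1)
    (f := fun y => ENNReal.ofReal (Real.exp (s * y ^ 2))) (g := fun a => ∑ i, a i * u i)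
    (by fun_prop) (by fun_prop)
  rw [← this, map_dot, lintegral_map (by fun_prop) (by fun_prop)]
  simp_rw [mul_pow, mul_assoc]

lemma lintegral_pi_prod {m : ℕ} {X : Type*} [MeasurableSpace X] (ν : Measure X)
    [IsProbabilityMeasure ν] (f : Fin m → X → ENNReal) (hf : ∀ i, Measurable (f i)) :
    ∫⁻ x, ∏ k, f k (x k) ∂(Measure.pi fun _ : Fin m => ν) = ∏ k, ∫⁻ x, f k x ∂ν := by
  rw [lintegral_prod_eq_prod_lintegral_of_indepFun Finset.univ
    (fun k (x : Fin m → X) => f k (x k))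
    (iIndepFun_pi (fun i => (hf i).aemeasurable)) (fun i => (hf i).comp (measurable_pi_apply i))]
  refine Finset.prod_congr rfl fun k _ => ?_
  exact (measurePreserving_eval (fun _ : Fin m => ν) k).lintegral_comp (hf k)

/-- The quadratic form. -/
noncomputable def qf {n m : ℕ} (p : Fin m → ℝ) (ω : (Fin m → Fin n → ℝ) × (Fin m → ℝ))
    (u : EuclideanSpace ℝ (Fin n)) : ℝ :=
  ∑ k, p k * ω.2 k * (∑ i, ω.1 k i * u i) ^ 2

lemma lintegral_rad (f : ℝ → ENNReal) :
    ∫⁻ x, f x ∂rademacher = 2⁻¹ * (f 1 + f (-1)) := by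
  simp [rademacher, lintegral_add_measure, mul_add]

lemma mgf_bound {n m : ℕ} (p : Fin m → ℝ) (u : EuclideanSpace ℝ (Fin n)) (l : ℝ)
    (hl : ∀ k, |l * p k * ‖u‖ ^ 2| ≤ 1/4) :
    ∫⁻ ω, ENNReal.ofReal (Real.exp (l * qf p ω u))
      ∂((Measure.pi fun _ : Fin m => Measure.pi fun _ : Fin n => gaussianReal 0 1).prod
              (Measure.pi fun _ : Fin m => rademacher))
      ≤ ENNReal.ofReal (Real.exp (4 * l ^ 2 * ‖u‖ ^ 4 * ∑ k, p k ^ 2)) := by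
  have hm : Measurable (fun ω : (Fin m → Fin n → ℝ) × (Fin m → ℝ) =>
      ENNReal.ofReal (Real.exp (l * qf p ω u))) := by
    unfold qf; fun_prop
  rw [lintegral_prod _ hm.aemeasurable]
  have h1 : ∀ (a : Fin m → Fin n → ℝ) (e : Fin m → ℝ),
      ENNReal.ofReal (Real.exp (l * qf p (a, e) u))
        = ∏ k, ENNReal.ofReal (Real.exp (l * p k * e k * (∑ i, a k i * u i) ^ 2)) := by
    intro a e
    rw [← ENNReal.ofReal_prod_of_nonneg (fun _ _ => (Real.exp_pos _).le), ← Real.exp_sum, qf,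
      Finset.mul_sum]
    congr 2
    exact Finset.sum_congr rfl fun i _ => by ring
  simp_rw [h1]
  have h2 : ∀ a : Fin m → Fin n → ℝ,
      ∫⁻ e, ∏ k, ENNReal.ofReal (Real.exp (l * p k * e k * (∑ i, a k i * u i) ^ 2))
        ∂(Measure.pi fun _ : Fin m => rademacher)
      = ∏ k, (2⁻¹ * (ENNReal.ofReal (Real.exp (l * p k * (∑ i, a k i * u i) ^ 2))
          + ENNReal.ofReal (Real.exp (-(l * p k) * (∑ i, a k i * u i) ^ 2)))) := by
    intro a
    rw [lintegral_pi_prod rademacher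
      (fun k x => ENNReal.ofReal (Real.exp (l * p k * x * (∑ i, a k i * u i) ^ 2)))
      (fun k => by fun_prop)]
    refine Finset.prod_congr rfl fun k _ => ?_
    rw [lintegral_rad]
    simp
  simp_rw [h2]
  rw [lintegral_pi_prod (Measure.pi fun _ : Fin n => gaussianReal 0 1)
    (fun k x => 2⁻¹ * (ENNReal.ofReal (Real.exp (l * p k * (∑ i, x i * u i) ^ 2))
          + ENNReal.ofReal (Real.exp (-(l * p k) * (∑ i, x i * u i) ^ 2)))) (fun k => by fun_prop)]
  have h3 : ∀ k, ∫⁻ x, 2⁻¹ * (ENNReal.ofReal (Real.exp (l * p k * (∑ i, x i * u i) ^ 2))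
          + ENNReal.ofReal (Real.exp (-(l * p k) * (∑ i, x i * u i) ^ 2)))
          ∂(Measure.pi fun _ : Fin n => gaussianReal 0 1)
          ≤ ENNReal.ofReal (Real.exp (4 * (l * p k * ‖u‖ ^ 2) ^ 2)) := by
    intro k
    obtain ⟨ha, hb⟩ := abs_le.1 (hl k)
    rw [lintegral_const_mul _ (by fun_prop), lintegral_add_left (by fun_prop),
      lintegral_dot _ _ _ (by linarith), lintegral_dot _ _ _ (by linarith),
      ← ENNReal.ofReal_add (by positivity) (by positivity)]
    have : (2⁻¹ : ENNReal) = ENNReal.ofReal (2⁻¹) := by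
      rw [ENNReal.ofReal_inv_of_pos (by norm_num)]; simp
    rw [this, ← ENNReal.ofReal_mul (by norm_num)]
    apply ENNReal.ofReal_le_ofReal
    refine le_trans (le_of_eq ?_) (sqrt_avg_bound _ (hl k))
    rw [show 1 - 2 * (-(l * p k) * ‖u‖ ^ 2) = 1 + 2 * (l * p k * ‖u‖ ^ 2) by ring]
    ring
  refine (Finset.prod_le_prod' fun k _ => h3 k).trans (le_of_eq ?_)
  rw [← ENNReal.ofReal_prod_of_nonneg (fun _ _ => (Real.exp_pos _).le), ← Real.exp_sum,
    Finset.mul_sum]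
  congr 2
  exact Finset.sum_congr rfl fun i _ => by ring

lemma inner_T {n m : ℕ} (p : Fin m → ℝ) (ω : (Fin m → Fin n → ℝ) × (Fin m → ℝ))
    (u w : EuclideanSpace ℝ (Fin n)) :
    inner ℝ (Matrix.toEuclideanCLM (𝕜 := ℝ)
      (Matrix.of fun i j : Fin n => ∑ k, p k * ω.2 k * (ω.1 k i * ω.1 k j)) u) w
    = ∑ k, p k * ω.2 k * ((∑ i, ω.1 k i * u i) * (∑ i, ω.1 k i * w i)) := by
  rw [PiLp.inner_apply]
  simp only [Matrix.ofLp_toEuclideanCLM, Matrix.mulVec, dotProduct, Matrix.of_apply]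
  simp only [RCLike.inner_apply, conj_trivial, Finset.sum_mul, Finset.mul_sum]
  rw [Finset.sum_comm (s := (Finset.univ : Finset (Fin m)))]
  refine Finset.sum_congr rfl fun i _ => ?_
  conv_rhs => rw [Finset.sum_comm]
  refine Finset.sum_congr rfl fun j _ => ?_
  refine Finset.sum_congr rfl fun k _ => ?_
  ring

lemma exists_vec {n m : ℕ} (hn : 1 ≤ n) (p : Fin m → ℝ) (ω : (Fin m → Fin n → ℝ) × (Fin m → ℝ)) :
    ∃ v : EuclideanSpace ℝ (Fin n), ‖v‖ = 1 ∧ ∀ u ∈ Metric.ball v (1/4),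
      3/8 * specNorm (Matrix.of fun i j : Fin n => ∑ k, p k * ω.2 k * (ω.1 k i * ω.1 k j))
        ≤ |qf p ω u| := by
  unfold specNorm
  have hinner := inner_T p ω
  set T := Matrix.toEuclideanCLM (𝕜 := ℝ)
      (Matrix.of fun i j : Fin n => ∑ k, p k * ω.2 k * (ω.1 k i * ω.1 k j)) with hT
  have hq : ∀ u, inner ℝ (T u) u = qf p ω u := by
    intro u; rw [hinner, qf]; simp_rw [sq]
  have hsymm : ∀ u w, inner ℝ (T u) w = inner ℝ (T w) u := by
    intro u w; rw [hinner, hinner]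
    exact Finset.sum_congr rfl fun i _ => by ring
  have hS : (T : EuclideanSpace ℝ (Fin n) →ₗ[ℝ] EuclideanSpace ℝ (Fin n)).IsSymmetric := by
    intro u w
    exact (hsymm u w).trans (real_inner_comm _ _ )
  have : Nonempty (Fin n) := ⟨⟨0, hn⟩⟩
  rcases (norm_nonneg T).eq_or_lt with h0 | hpos
  · obtain ⟨v, hv⟩ := exists_norm_eq (EuclideanSpace ℝ (Fin n)) zero_le_one
    refine ⟨v, hv, fun u _ => ?_⟩
    rw [← h0]; simp
  have hsup := T.norm_eq_iSup_rayleighQuotient hS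
  obtain ⟨x, hx⟩ := exists_lt_of_lt_ciSup (f := fun x => |T.rayleighQuotient x|)
    (show 15/16 * ‖T‖ < _ by rw [← hsup]; linarith)
  have hx0 : x ≠ 0 := by
    rintro rfl
    simp [ContinuousLinearMap.rayleighQuotient] at hx
    linarith
  have hxn : ‖x‖ ≠ 0 := norm_ne_zero_iff.2 hx0
  set v := (‖x‖⁻¹ : ℝ) • x with hv
  have hvn : ‖v‖ = 1 := by rw [hv, norm_smul, norm_inv, norm_norm, inv_mul_cancel₀ hxn]
  refine ⟨v, hvn, fun u hu => ?_⟩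
  have hx' : 15/16 * ‖T‖ < |qf p ω v| := by
    have h := T.rayleigh_smul x (c := ‖x‖⁻¹) (inv_ne_zero hxn)
    rw [← h, ← hv, ContinuousLinearMap.rayleighQuotient, hvn,
      ContinuousLinearMap.reApplyInnerSelf_apply, hq] at hx
    simpa using hx
  have hd : qf p ω u - qf p ω v = inner ℝ (T (u - v)) (u + v) := by
    rw [← hq, ← hq, map_sub, inner_sub_left, inner_add_right, inner_add_right, hsymm v u]
    ring
  have hu1 : ‖u - v‖ ≤ 1/4 := by
    rw [Metric.mem_ball, dist_eq_norm] at hu; exact hu.le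
  have hu2 : ‖u + v‖ ≤ 9/4 := by
    calc ‖u + v‖ = ‖(u - v) + v + v‖ := by congr 1; abel
      _ ≤ ‖u - v‖ + ‖v‖ + ‖v‖ := norm_add₃_le
      _ ≤ _ := by rw [hvn]; linarith
  have hb : |qf p ω u - qf p ω v| ≤ 9/16 * ‖T‖ := by
    rw [hd]
    calc _ ≤ ‖T (u - v)‖ * ‖u + v‖ := abs_real_inner_le_norm _ _
      _ ≤ (‖T‖ * (1/4)) * (9/4) := by
        gcongr
        exact (T.le_opNorm _).trans (by gcongr)
      _ = _ := by ring
  have := abs_sub_abs_le_abs_sub (qf p ω v) (qf p ω u)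
  rw [abs_sub_comm] at this
  linarith

lemma exp_bound {n m : ℕ} (hn : 1 ≤ n) (p : Fin m → ℝ) (l : ℝ) (hl0 : 0 ≤ l)
    (hl : ∀ k, l * |p k| ≤ 1/8) (hl2 : l ^ 2 * ∑ k, p k ^ 2 ≤ n) :
    ∫⁻ ω : (Fin m → Fin n → ℝ) × (Fin m → ℝ), ENNReal.ofReal (Real.exp (l * (3/8 *
          specNorm (Matrix.of fun i j : Fin n => ∑ k, p k * ω.2 k * (ω.1 k i * ω.1 k j)))))
      ∂((Measure.pi fun _ : Fin m => Measure.pi fun _ : Fin n => gaussianReal 0 1).prod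
              (Measure.pi fun _ : Fin m => rademacher))
      ≤ ENNReal.ofReal (Real.exp (15 * n)) := by
  set P := ((Measure.pi fun _ : Fin m => Measure.pi fun _ : Fin n => gaussianReal 0 1).prod
              (Measure.pi fun _ : Fin m => rademacher)) with hP
  set V : Measure (EuclideanSpace ℝ (Fin n)) := volume
  set b := V (Metric.ball 0 (1/4)) with hb
  have hb0 : b ≠ 0 := (Metric.measure_ball_pos _ _ (by norm_num)).ne'
  have hbt : b ≠ ⊤ := measure_ball_lt_top.ne
  have hball : V (Metric.ball 0 (5/4)) = ENNReal.ofReal (5 ^ n) * b := by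
    have := Measure.addHaar_ball_mul_of_pos V 0 (r := 5) (by norm_num) (1/4)
    rw [finrank_euclideanSpace_fin] at this
    rw [hb, ← this]; norm_num
  set F : (Fin m → Fin n → ℝ) × (Fin m → ℝ) → EuclideanSpace ℝ (Fin n) → ENNReal := fun ω u =>
    ENNReal.ofReal (Real.exp (l * qf p ω u)) + ENNReal.ofReal (Real.exp (-l * qf p ω u)) with hF
  have hmeas : Measurable (Function.uncurry F) := by
    unfold Function.uncurry
    simp only [hF]
    unfold qf
    fun_prop
  have key : ∀ ω : (Fin m → Fin n → ℝ) × (Fin m → ℝ), ENNReal.ofReal (Real.exp (l * (3/8 *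
          specNorm (Matrix.of fun i j : Fin n => ∑ k, p k * ω.2 k * (ω.1 k i * ω.1 k j)))))
       ≤ b⁻¹ * ∫⁻ u in Metric.ball 0 (5/4), F ω u ∂V := by
    intro ω
    obtain ⟨v, hv, hu⟩ := exists_vec hn p ω
    rw [← ENNReal.div_eq_inv_mul, ENNReal.le_div_iff_mul_le (Or.inl hb0) (Or.inl hbt), hb,
      ← Measure.addHaar_ball_center V v, ← setLIntegral_const]
    refine (setLIntegral_mono' Metric.isOpen_ball.measurableSet (g := F ω) ?_).trans
      (lintegral_mono_set ?_)
    · intro u hu'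
      have h := hu u hu'
      rw [hF]
      rcases abs_cases (qf p ω u) with ⟨h1, _⟩ | ⟨h1, _⟩
      · refine le_add_right (ENNReal.ofReal_le_ofReal (Real.exp_le_exp.2 ?_))
        rw [h1] at h
        gcongr
      · refine le_add_left (ENNReal.ofReal_le_ofReal (Real.exp_le_exp.2 ?_))
        rw [h1] at h
        rw [neg_mul, ← mul_neg]
        gcongr
    · apply Metric.ball_subset_ball'
      rw [dist_zero_right, hv]; norm_num
  have hFu : ∀ u ∈ Metric.ball (0 : EuclideanSpace ℝ (Fin n)) (5/4),
      ∫⁻ ω, F ω u ∂P ≤ ENNReal.ofReal (2 * Real.exp (12 * n)) := by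
    intro u hu
    rw [mem_ball_zero_iff] at hu
    have hu2 : ‖u‖ ^ 2 ≤ 2 := by nlinarith [norm_nonneg u]
    have hu4 : ‖u‖ ^ 4 ≤ 3 := by
      calc ‖u‖ ^ 4 ≤ (5/4) ^ 4 := by gcongr
        _ ≤ _ := by norm_num
    have hlk : ∀ k, |l * p k * ‖u‖ ^ 2| ≤ 1/4 := by
      intro k
      rw [abs_mul, abs_mul, abs_of_nonneg hl0, abs_of_nonneg (sq_nonneg ‖u‖)]
      nlinarith [hl k, mul_nonneg hl0 (abs_nonneg (p k))]
    have e1 := mgf_bound p u l hlk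
    have e2 := mgf_bound p u (-l) (fun k => by
      rw [show -l * p k * ‖u‖ ^ 2 = -(l * p k * ‖u‖ ^ 2) by ring, abs_neg]; exact hlk k)
    have e3 : Real.exp (4 * l ^ 2 * ‖u‖ ^ 4 * ∑ k, p k ^ 2) ≤ Real.exp (12 * n) := by
      apply Real.exp_le_exp.2
      have h0 : 0 ≤ l ^ 2 * ∑ k, p k ^ 2 :=
        mul_nonneg (sq_nonneg _) (Finset.sum_nonneg fun _ _ => sq_nonneg _)
      nlinarith [pow_nonneg (norm_nonneg u) 4]
    rw [neg_sq] at e2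
    simp only [hF]
    rw [lintegral_add_left (by unfold qf; fun_prop), two_mul,
      ENNReal.ofReal_add (Real.exp_pos _).le (Real.exp_pos _).le]
    exact add_le_add (e1.trans (ENNReal.ofReal_le_ofReal e3))
      (e2.trans (ENNReal.ofReal_le_ofReal e3))
  calc _ ≤ ∫⁻ ω, b⁻¹ * ∫⁻ u in Metric.ball 0 (5/4), F ω u ∂V ∂P := lintegral_mono key
    _ = b⁻¹ * ∫⁻ ω, ∫⁻ u in Metric.ball 0 (5/4), F ω u ∂V ∂P :=
      lintegral_const_mul' _ _ (ENNReal.inv_ne_top.2 hb0)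
    _ = b⁻¹ * ∫⁻ u in Metric.ball 0 (5/4), ∫⁻ ω, F ω u ∂P ∂V := by
      rw [lintegral_lintegral_swap hmeas.aemeasurable]
    _ ≤ b⁻¹ * ∫⁻ u in Metric.ball 0 (5/4), ENNReal.ofReal (2 * Real.exp (12 * n)) ∂V := by
      gcongr 1
      exact setLIntegral_mono' Metric.isOpen_ball.measurableSet hFu
    _ = b⁻¹ * b * (ENNReal.ofReal (2 * Real.exp (12 * n)) * ENNReal.ofReal (5 ^ n)) := by
      rw [setLIntegral_const, hball]; ring
    _ = ENNReal.ofReal (2 * Real.exp (12 * n) * 5 ^ n) := by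
      rw [ENNReal.inv_mul_cancel hb0 hbt, one_mul,
        ← ENNReal.ofReal_mul (by positivity)]
    _ ≤ _ := by
      apply ENNReal.ofReal_le_ofReal
      have h2 : (2:ℝ) ≤ Real.exp n := by
        have := Real.add_one_le_exp (n:ℝ)
        have : (1:ℝ) ≤ n := by exact_mod_cast hn
        linarith
      have h5 : (5:ℝ) ^ n ≤ Real.exp (2 * n) := by
        rw [mul_comm, Real.exp_nat_mul]
        gcongr
        have := Real.exp_one_gt_d9
        rw [show (2:ℝ) = 1 + 1 by norm_num, Real.exp_add]
        nlinarith
      calc _ ≤ Real.exp n * Real.exp (12 * n) * Real.exp (2 * n) := by gcongr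
        _ = _ := by rw [← Real.exp_add, ← Real.exp_add]; congr 1; ring

/-- For `H̃ = Σᵢ pᵢεᵢaᵢaᵢᵀ` with `aᵢ` i.i.d. `N(0,I_n)`, `εᵢ` i.i.d. Rademacher
independent of the `aᵢ`, and fixed `p ∈ ℝᵐ`: there is a universal constant `C > 0`
such that for all sufficiently large `n`,
`E[‖H̃‖₂] ≤ C·(‖p‖₂·√n + ‖p‖_∞·n)`. -/
theorem stmt15 :
    ∃ C : ℝ, 0 < C ∧ ∃ N : ℕ, ∀ n : ℕ, N ≤ n → ∀ (m : ℕ) (p : Fin m → ℝ),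
      ∫ ω : (Fin m → Fin n → ℝ) × (Fin m → ℝ),
          specNorm (Matrix.of fun i j : Fin n => ∑ k, p k * ω.2 k * (ω.1 k i * ω.1 k j))
          ∂((Measure.pi fun _ : Fin m => Measure.pi fun _ : Fin n => gaussianReal 0 1).prod
              (Measure.pi fun _ : Fin m => rademacher))
        ≤ C * (Real.sqrt (∑ i, p i ^ 2) * Real.sqrt n + (⨆ i, |p i|) * n) := by
  refine ⟨400, by norm_num, 1, fun n hn m p => ?_⟩
  have hn1 : (1:ℝ) ≤ n := by exact_mod_cast hn
  have hle : ∀ k, |p k| ≤ ⨆ i, |p i| := fun k => le_ciSup (f := fun i => |p i|)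
    (Set.finite_range _).bddAbove k
  have hM0 : 0 ≤ ⨆ i, |p i| := Real.iSup_nonneg fun i => abs_nonneg _
  set M := ⨆ i, |p i| with hM
  set S := Real.sqrt (∑ i, p i ^ 2) with hS
  have hS0 : 0 ≤ S := Real.sqrt_nonneg _
  have hS2 : S ^ 2 = ∑ i, p i ^ 2 := Real.sq_sqrt (Finset.sum_nonneg fun _ _ => sq_nonneg _)
  have hrn : 0 < Real.sqrt n := Real.sqrt_pos.2 (by linarith)
  have hrn2 : Real.sqrt n ^ 2 = n := Real.sq_sqrt (by linarith)
  have hrhs : 0 ≤ 400 * (S * Real.sqrt n + M * n) := by positivity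
  rcases hS0.eq_or_lt with h0 | hSpos
  · have hp : ∀ i, p i = 0 := by
      rw [← h0] at hS2
      have := (Finset.sum_eq_zero_iff_of_nonneg (s := Finset.univ) (f := fun i => p i ^ 2)
        (fun _ _ => sq_nonneg _)).1 (by rw [← hS2]; simp)
      intro i
      exact pow_eq_zero_iff (two_ne_zero) |>.1 (this i (Finset.mem_univ _))
    refine le_trans (le_of_eq ?_) hrhs
    have : (Matrix.of fun i j : Fin n => (0:ℝ)) = 0 := rfl
    simp [hp, specNorm, this]
  set D := S / Real.sqrt n + 8 * M with hD
  have hDpos : 0 < D := by positivity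
  have hb := exp_bound hn p D⁻¹ (by positivity) (fun k => by
      rw [inv_mul_le_iff₀ hDpos]
      have := hle k
      have : 0 ≤ S / Real.sqrt n := by positivity
      linarith) (by
      rw [← hS2, inv_pow, inv_mul_le_iff₀ (by positivity)]
      have h1 : S / Real.sqrt n ≤ D := by linarith
      have h2 : S ≤ D * Real.sqrt n := by rwa [div_le_iff₀ hrn] at h1
      calc S ^ 2 ≤ (D * Real.sqrt n) ^ 2 := by gcongr
        _ = _ := by rw [mul_pow, hrn2])
  set P := ((Measure.pi fun _ : Fin m => Measure.pi fun _ : Fin n => gaussianReal 0 1).prod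
              (Measure.pi fun _ : Fin m => rademacher)) with hP
  set h : (Fin m → Fin n → ℝ) × (Fin m → ℝ) → ℝ := fun ω =>
    specNorm (Matrix.of fun i j : Fin n => ∑ k, p k * ω.2 k * (ω.1 k i * ω.1 k j)) with hh
  have hh0 : ∀ ω, 0 ≤ h ω := fun ω => norm_nonneg _
  change ∫ ω, h ω ∂P ≤ _
  by_cases hi : Integrable h P
  swap
  · rw [integral_undef hi]; exact hrhs
  have hc : (8/3 * D) * (15 * n + 1) ≤ 400 * (S * Real.sqrt n + M * n) := by
    have : D * n = S * Real.sqrt n + 8 * (M * n) := by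
      rw [hD, add_mul]
      have : S / Real.sqrt n * n = S * Real.sqrt n := by
        rw [div_mul_eq_mul_div, div_eq_iff hrn.ne', mul_assoc, ← sq, hrn2]
      rw [this]; ring
    have h3 : (8/3 * D) * (15 * n + 1) ≤ 43 * (D * n) := by nlinarith
    have h4 : 0 ≤ S * Real.sqrt n := by positivity
    have h5 : 0 ≤ M * n := by positivity
    rw [this] at h3
    linarith
  refine le_trans ?_ hc
  have hmain : ∫⁻ ω, ENNReal.ofReal (h ω) ∂P ≤ ENNReal.ofReal ((8/3 * D) * (15 * n + 1)) := by
    have hpt : ∀ ω, ENNReal.ofReal (h ω) ≤ ENNReal.ofReal (8/3 * D) *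
        (ENNReal.ofReal (15 * n) + ENNReal.ofReal (Real.exp (-(15 * n))) *
          ENNReal.ofReal (Real.exp (D⁻¹ * (3/8 * h ω)))) := by
      intro ω
      rw [← ENNReal.ofReal_mul (Real.exp_pos _).le, ← ENNReal.ofReal_add (by positivity)
        (by positivity), ← ENNReal.ofReal_mul (by positivity), ← Real.exp_add]
      apply ENNReal.ofReal_le_ofReal
      have e1 := Real.add_one_le_exp (-(15 * n) + D⁻¹ * (3/8 * h ω))
      have e2 : h ω = (8/3 * D) * (D⁻¹ * (3/8 * h ω)) := by field_simp
      calc h ω = (8/3 * D) * (D⁻¹ * (3/8 * h ω)) := e2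
        _ ≤ _ := by gcongr; linarith
    refine (lintegral_mono hpt).trans ?_
    rw [lintegral_const_mul' _ _ ENNReal.ofReal_ne_top, lintegral_add_left measurable_const,
      lintegral_const, measure_univ, mul_one, lintegral_const_mul' _ _ ENNReal.ofReal_ne_top,
      ENNReal.ofReal_mul (p := 8/3 * D) (by positivity),
      ENNReal.ofReal_add (by positivity) zero_le_one]
    gcongr
    calc _ ≤ ENNReal.ofReal (Real.exp (-(15 * n))) * ENNReal.ofReal (Real.exp (15 * n)) := by
          gcongr
      _ = _ := by rw [← ENNReal.ofReal_mul (Real.exp_pos _).le, ← Real.exp_add]; simp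
  rw [integral_eq_lintegral_of_nonneg_ae (Filter.Eventually.of_forall hh0) hi.1]
  exact ENNReal.toReal_le_of_le_ofReal (by positivity) hmain
end
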